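/- arXiv:math/0412166 — 5 statements merged into one kernel-verified Lean document; each statement's English description precedes it below -/
import Mathlib

section
/- Let (Ω, μ) be a probability space, F : Ω → Ω a measure-preserving map, and 𝓛 : L²(μ) → L²(μ) a linear map satisfying ∫ (𝓛g)·h dμ = ∫ g·(h∘F) dμ for all g, h ∈ L²(μ). Then for every v ∈ L²(μ): ∫∫ (v(y) − v(y′))² dμ(y) dμ(y′) = 2 ∫ (v − (𝓛v)∘F)² dμ + ∫∫ ((𝓛v)(y) − (𝓛v)(y′))² dμ(y) dμ(y′). -/
/-!
For `f ∈ L²(μ)` over a probability measure, `∫∫ (f y - f y')² = 2 ∫ f² - 2 (∫ f)²`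
(`integral_prod_sub_sq`), so the claim compares first and second moments of `v` and `w = 𝓛v`.
Duality against the constant `1` gives `∫ w = ∫ v`, so the squared means cancel. Duality against
`w` itself gives `∫ v · (w ∘ F) = ∫ w²`, and invariance of `μ` gives `∫ (w ∘ F)² = ∫ w²`; hence
`∫ (v - w ∘ F)² = ∫ v² - ∫ w²`.
-/

open MeasureTheory

/-- The double integral of a squared difference is twice the variance. -/
lemma integral_prod_sub_sq {Ω : Type*} [MeasurableSpace Ω] (μ : Measure Ω)
    [IsProbabilityMeasure μ] {f : Ω → ℝ} (hf : MemLp f 2 μ) :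
    ∫ p : Ω × Ω, (f p.1 - f p.2) ^ 2 ∂(μ.prod μ) =
      2 * (∫ x, f x ^ 2 ∂μ) - 2 * (∫ x, f x ∂μ) ^ 2 := by
  have h1 : Integrable f μ := hf.integrable (by norm_num)
  have h2 : Integrable (fun x => f x ^ 2) μ := hf.integrable_sq
  have i1 : Integrable (fun p : Ω × Ω => f p.1 ^ 2) (μ.prod μ) := h2.comp_fst μ
  have i2 : Integrable (fun p : Ω × Ω => f p.2 ^ 2) (μ.prod μ) := h2.comp_snd μ
  have i3 : Integrable (fun p : Ω × Ω => 2 * (f p.1 * f p.2)) (μ.prod μ) :=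
    (h1.mul_prod h1).const_mul 2
  have e1 : ∫ p : Ω × Ω, f p.1 ^ 2 ∂(μ.prod μ) = ∫ x, f x ^ 2 ∂μ := by
    simpa using integral_fun_fst (μ := μ) (ν := μ) (fun x => f x ^ 2)
  have e2 : ∫ p : Ω × Ω, f p.2 ^ 2 ∂(μ.prod μ) = ∫ x, f x ^ 2 ∂μ := by
    simpa using integral_fun_snd (μ := μ) (ν := μ) (fun x => f x ^ 2)
  calc ∫ p : Ω × Ω, (f p.1 - f p.2) ^ 2 ∂(μ.prod μ)
      = ∫ p : Ω × Ω, (f p.1 ^ 2 + f p.2 ^ 2 - 2 * (f p.1 * f p.2)) ∂(μ.prod μ) := by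
        congr 1; ext p; ring
    _ = _ := by
        rw [integral_sub (by exact i1.add i2) i3, integral_add i1 i2, integral_const_mul,
          integral_prod_mul, e1, e2]
        ring

/-- For a transfer operator `𝓛` dual to a measure-preserving map `F` on a probability
space, and any `v ∈ L²(μ)`:
`∫∫ (v y - v y')² = 2 ∫ (v - (𝓛v)∘F)² + ∫∫ ((𝓛v) y - (𝓛v) y')²`. -/
theorem stmt6 {Ω : Type*} [MeasurableSpace Ω] (μ : Measure Ω) [IsProbabilityMeasure μ]
    (F : Ω → Ω) (hF : MeasurePreserving F μ μ)
    (L : Lp ℝ 2 μ →ₗ[ℝ] Lp ℝ 2 μ)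
    (hdual : ∀ g h : Lp ℝ 2 μ,
      ∫ x, (L g : Ω → ℝ) x * (h : Ω → ℝ) x ∂μ =
        ∫ x, (g : Ω → ℝ) x * (h : Ω → ℝ) (F x) ∂μ) :
    ∀ v : Lp ℝ 2 μ,
      ∫ p : Ω × Ω, ((v : Ω → ℝ) p.1 - (v : Ω → ℝ) p.2) ^ 2 ∂(μ.prod μ) =
        2 * (∫ x, ((v : Ω → ℝ) x - (L v : Ω → ℝ) (F x)) ^ 2 ∂μ) +
          ∫ p : Ω × Ω, ((L v : Ω → ℝ) p.1 - (L v : Ω → ℝ) p.2) ^ 2 ∂(μ.prod μ) := by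
  intro v
  have hv : MemLp v 2 μ := Lp.memLp v
  have hw : MemLp (L v) 2 μ := Lp.memLp (L v)
  have hwF : MemLp (fun x => (L v : Ω → ℝ) (F x)) 2 μ := hw.comp_measurePreserving hF
  have mean : ∫ x, (L v : Ω → ℝ) x ∂μ = ∫ x, (v : Ω → ℝ) x ∂μ := by
    have hc : MemLp (fun _ : Ω => (1 : ℝ)) 2 μ := memLp_const 1
    have h := hdual v (hc.toLp _)
    have ae1 := hc.coeFn_toLp
    have ae2 := hF.quasiMeasurePreserving.ae ae1
    have l : ∫ x, (L v : Ω → ℝ) x * (hc.toLp _ : Ω → ℝ) x ∂μ = ∫ x, (L v : Ω → ℝ) x ∂μ := by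
      refine integral_congr_ae ?_
      filter_upwards [ae1] with x hx
      rw [hx, mul_one]
    have r : ∫ x, (v : Ω → ℝ) x * (hc.toLp _ : Ω → ℝ) (F x) ∂μ = ∫ x, (v : Ω → ℝ) x ∂μ := by
      refine integral_congr_ae ?_
      filter_upwards [ae2] with x hx
      rw [hx, mul_one]
    rw [← l, h, r]
  have cross : ∫ x, (v : Ω → ℝ) x * (L v : Ω → ℝ) (F x) ∂μ = ∫ x, (L v : Ω → ℝ) x ^ 2 ∂μ := by
    rw [← hdual v (L v)]
    simp only [sq]
  have inv : ∫ x, (L v : Ω → ℝ) (F x) ^ 2 ∂μ = ∫ x, (L v : Ω → ℝ) x ^ 2 ∂μ := by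
    have hm : AEStronglyMeasurable (fun x => (L v : Ω → ℝ) x ^ 2) (μ.map F) := by
      rw [hF.map_eq]
      exact hw.integrable_sq.aestronglyMeasurable
    have h := integral_map hF.aemeasurable hm
    rw [hF.map_eq] at h
    exact h.symm
  have i3 : Integrable (fun x => 2 * ((v : Ω → ℝ) x * (L v : Ω → ℝ) (F x))) μ :=
    (hv.integrable_mul hwF).const_mul 2
  have mid : ∫ x, ((v : Ω → ℝ) x - (L v : Ω → ℝ) (F x)) ^ 2 ∂μ =
      (∫ x, (v : Ω → ℝ) x ^ 2 ∂μ) - ∫ x, (L v : Ω → ℝ) x ^ 2 ∂μ := by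
    calc ∫ x, ((v : Ω → ℝ) x - (L v : Ω → ℝ) (F x)) ^ 2 ∂μ
        = ∫ x, ((v : Ω → ℝ) x ^ 2 + (L v : Ω → ℝ) (F x) ^ 2
            - 2 * ((v : Ω → ℝ) x * (L v : Ω → ℝ) (F x))) ∂μ := by
          congr 1; ext x; ring
      _ = _ := by
          rw [integral_sub (by exact hv.integrable_sq.add hwF.integrable_sq) i3,
            integral_add hv.integrable_sq hwF.integrable_sq, integral_const_mul, cross, inv]
          ring
  rw [integral_prod_sub_sq μ hv, integral_prod_sub_sq μ hw, mid, mean]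
  ring
end

section
/- Let ρ, β ∈ (0,1) and a, b, c ≥ 0. There exists a constant C > 0, depending only on ρ, β, a, b, c, with the following property. For every sequence (L_j)_{j≥1} of nonnegative reals with Σ_{j=1}^{∞} L_j² < ∞, define B_q := a·L_q + b·Σ_{p=q}^{∞} L_{p+1}/(p−q+1)² for q ≥ 1, and Γ_l^k := ρ^{k−l} ( B_{l+1} + c·Σ_{j=1}^{l} β^{l−j} L_j ) for integers 1 ≤ l ≤ k−1. Then Σ_{k=2}^{∞} ( Σ_{l=1}^{k−1} Γ_l^k )² ≤ C · Σ_{j=1}^{∞} L_j². -/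
/-!
The map `L ↦ (∑_l Γ_l^k)_k` is assembled from convolutions with summable kernels: `ρ^m` (causal),
`1/(p+1)²` (anticausal) and `β^m` (causal). Each such convolution is bounded on `ℓ²` by the `ℓ¹`
norm of its kernel; this is Schur's test `stmt10_schur`. The bound for the composite follows from
`(x + y + z)² ≤ 3 (x² + y² + z²)` for the inner expression, and one more application of the test
for the outer factor `ρ^(k-l)`.

All sums are estimated in `ℝ≥0∞`, where no summability has to be checked, and the result is
transferred to `ℝ` at the end. Sequences are re-indexed from `0`, so `L (j + 1)` sits at index `j`.
-/

open Finset
open scoped ENNReal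

lemma stmt10_two_mul_le (x y : ℝ≥0∞) : 2 * (x * y) ≤ x ^ 2 + y ^ 2 := by
  by_cases hx : x = ⊤
  · subst hx; simp
  by_cases hy : y = ⊤
  · subst hy; simp
  lift x to NNReal using hx
  lift y to NNReal using hy
  norm_cast
  rw [← mul_assoc]
  exact two_mul_le_add_sq x y

lemma stmt10_add_three_sq_le (x y z : ℝ≥0∞) :
    (x + y + z) ^ 2 ≤ 3 * (x ^ 2 + y ^ 2 + z ^ 2) := by
  calc (x + y + z) ^ 2
      = x ^ 2 + y ^ 2 + z ^ 2 + (2 * (x * y) + 2 * (x * z) + 2 * (y * z)) := by ring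
    _ ≤ x ^ 2 + y ^ 2 + z ^ 2 + ((x ^ 2 + y ^ 2) + (x ^ 2 + z ^ 2) + (y ^ 2 + z ^ 2)) := by
        gcongr <;> exact stmt10_two_mul_le _ _
    _ = _ := by ring

/-- Cauchy–Schwarz with weights, obtained by expanding the square as a double sum and applying
`2 f_i f_j ≤ f_i² + f_j²`, which avoids square roots in `ℝ≥0∞`. -/
lemma stmt10_cauchy (w f : ℕ → ℝ≥0∞) :
    (∑' j, w j * f j) ^ 2 ≤ (∑' j, w j) * ∑' j, w j * f j ^ 2 := by
  have key : 2 * (∑' j, w j * f j) ^ 2 ≤ 2 * ((∑' j, w j) * ∑' j, w j * f j ^ 2) := by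
    calc 2 * (∑' j, w j * f j) ^ 2
        = ∑' i, ∑' j, w i * w j * (2 * (f i * f j)) := by
          rw [sq, ← ENNReal.tsum_mul_right, ← ENNReal.tsum_mul_left]
          refine tsum_congr fun i => ?_
          rw [← ENNReal.tsum_mul_left, ← ENNReal.tsum_mul_left]
          refine tsum_congr fun j => ?_
          ring
      _ ≤ ∑' i, ∑' j, w i * w j * (f i ^ 2 + f j ^ 2) := by
          gcongr; exact stmt10_two_mul_le _ _
      _ = ∑' i, ((w i * f i ^ 2) * (∑' j, w j) + w i * ∑' j, w j * f j ^ 2) := by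
          refine tsum_congr fun i => ?_
          rw [← ENNReal.tsum_mul_left, ← ENNReal.tsum_mul_left, ← ENNReal.tsum_add]
          refine tsum_congr fun j => ?_
          ring
      _ = _ := by
          rw [ENNReal.tsum_add, ENNReal.tsum_mul_right, ENNReal.tsum_mul_right]
          ring
  exact (ENNReal.mul_le_mul_iff_right (by simp) (by simp)).1 key

/-- Schur's test: a nonnegative kernel whose row and column sums are at most `W` acts on `ℓ²` with
norm at most `W`. -/
lemma stmt10_schur (K : ℕ → ℕ → ℝ≥0∞) (W : ℝ≥0∞) (hrow : ∀ i, ∑' j, K i j ≤ W)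
    (hcol : ∀ j, ∑' i, K i j ≤ W) (f : ℕ → ℝ≥0∞) :
    ∑' i, (∑' j, K i j * f j) ^ 2 ≤ W ^ 2 * ∑' j, f j ^ 2 := by
  calc ∑' i, (∑' j, K i j * f j) ^ 2
      ≤ ∑' i, W * ∑' j, K i j * f j ^ 2 := by
        refine ENNReal.tsum_le_tsum fun i => (stmt10_cauchy _ _).trans ?_
        gcongr
        exact hrow i
    _ = W * ∑' j, (∑' i, K i j) * f j ^ 2 := by
        rw [ENNReal.tsum_mul_left, ENNReal.tsum_comm]
        simp_rw [ENNReal.tsum_mul_right]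
    _ ≤ W * ∑' j, W * f j ^ 2 := by
        gcongr with j
        exact hcol j
    _ = _ := by rw [ENNReal.tsum_mul_left]; ring

lemma stmt10_tsum_ite_le (w : ℕ → ℝ≥0∞) (φ : ℕ → Prop) [DecidablePred φ] (g : ℕ → ℕ)
    (hg : ∀ i j, φ i → φ j → g i = g j → i = j) :
    ∑' j, (if φ j then w (g j) else 0) ≤ ∑' m, w m := by
  have h : ∑' j, (if φ j then w (g j) else 0) = ∑' j : {j | φ j}, w (g j) := by
    rw [tsum_subtype {j | φ j} fun j => w (g j)]
    simp [Set.indicator_apply]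
  rw [h]
  refine ENNReal.tsum_comp_le_tsum_of_injective (f := fun j : {j | φ j} => g j) ?_ w
  intro i j hij
  exact Subtype.ext (hg _ _ i.2 j.2 hij)

/-- `ℓ²` bound for the convolution with `w` and shift `s` acting on past values. -/
lemma stmt10_conv_past (w f : ℕ → ℝ≥0∞) (s : ℕ) :
    ∑' i, (∑' j, (if j + s ≤ i then w (i - (j + s)) else 0) * f j) ^ 2 ≤
      (∑' m, w m) ^ 2 * ∑' j, f j ^ 2 :=
  stmt10_schur _ _
    (fun i => stmt10_tsum_ite_le w (fun j => j + s ≤ i) (fun j => i - (j + s))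
      (by intros; omega))
    (fun j => stmt10_tsum_ite_le w (fun i => j + s ≤ i) (fun i => i - (j + s))
      (by intros; omega)) f

/-- `ℓ²` bound for the convolution with `w` and shift `s` acting on future values. -/
lemma stmt10_conv_future (w f : ℕ → ℝ≥0∞) (s : ℕ) :
    ∑' i, (∑' p, w p * f (i + s + p)) ^ 2 ≤ (∑' m, w m) ^ 2 * ∑' j, f j ^ 2 := by
  refine le_trans (ENNReal.tsum_le_tsum fun i => ?_)
    (stmt10_schur (fun i j => if i + s ≤ j then w (j - (i + s)) else 0) _
    (fun i => stmt10_tsum_ite_le w (fun j => i + s ≤ j) (fun j => j - (i + s))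
      (by intros; omega))
    (fun j => stmt10_tsum_ite_le w (fun i => i + s ≤ j) (fun i => j - (i + s))
      (by intros; omega)) f)
  refine pow_le_pow_left' (le_trans (le_of_eq (tsum_congr fun p => ?_))
    (ENNReal.tsum_comp_le_tsum_of_injective (add_right_injective (i + s)) _)) 2
  simp

lemma stmt10_shift (f : ℕ → ℝ≥0∞) : ∑' n, f (n + 1) ^ 2 ≤ ∑' j, f j ^ 2 :=
  ENNReal.tsum_comp_le_tsum_of_injective (add_left_injective 1) fun j => f j ^ 2

/-- `ℓ²` bound for the inner expression, `B_{l+1} + c ∑ β^{l-j} L_j` with `l = n + 1`. -/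
lemma stmt10_inner (a b c : ℝ≥0∞) (u v f : ℕ → ℝ≥0∞) :
    ∑' n, (a * f (n + 1) + b * ∑' p, u p * f (n + 2 + p) +
        c * ∑' j, (if j + 0 ≤ n then v (n - (j + 0)) else 0) * f j) ^ 2 ≤
      3 * (a ^ 2 + b ^ 2 * (∑' m, u m) ^ 2 + c ^ 2 * (∑' m, v m) ^ 2) * ∑' j, f j ^ 2 := by
  refine (ENNReal.tsum_le_tsum fun n => stmt10_add_three_sq_le _ _ _).trans ?_
  simp_rw [mul_pow]
  rw [ENNReal.tsum_mul_left, ENNReal.tsum_add, ENNReal.tsum_add, ENNReal.tsum_mul_left,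
    ENNReal.tsum_mul_left, ENNReal.tsum_mul_left, mul_assoc, add_mul, add_mul, mul_assoc, mul_assoc]
  exact mul_le_mul_right (add_le_add (add_le_add (mul_le_mul_right (stmt10_shift f) _)
    (mul_le_mul_right (stmt10_conv_future u f 2) _))
    (mul_le_mul_right (stmt10_conv_past v f 0) _)) _

lemma stmt10_ofReal_tsum_le (f : ℕ → ℝ) (hf : ∀ n, 0 ≤ f n) :
    ENNReal.ofReal (∑' n, f n) ≤ ∑' n, ENNReal.ofReal (f n) := by
  by_cases h : Summable f
  · exact (ENNReal.ofReal_tsum_of_nonneg hf h).le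
  · simp [tsum_eq_zero_of_not_summable h]

/-- A finite causal convolution indexed by `1 ≤ l ≤ N` is dominated by the full kernel sum with
indices starting at `0`. -/
lemma stmt10_ofReal_past_le (r : ℝ) (hr : 0 ≤ r) (g : ℕ → ℝ) (hg : ∀ l, 0 ≤ g l)
    (h : ℕ → ℝ≥0∞) (hgh : ∀ n, ENNReal.ofReal (g (n + 1)) ≤ h n) (N M s i : ℕ)
    (hN : N ≤ M) (hi : i + 1 = M + s) :
    ENNReal.ofReal (∑ l ∈ Finset.Icc 1 N, r ^ (M - l) * g l) ≤
      ∑' j, (if j + s ≤ i then ENNReal.ofReal (r ^ (i - (j + s))) else 0) * h j := by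
  have hsum : ∑ l ∈ Finset.Icc 1 N, r ^ (M - l) * g l =
      ∑ j ∈ Finset.range N, r ^ (M - (j + 1)) * g (j + 1) := by
    rw [Finset.range_eq_Ico, Finset.sum_Ico_add' (fun l => r ^ (M - l) * g l) 0 N 1]
    rfl
  rw [hsum, ENNReal.ofReal_sum_of_nonneg fun j _ => mul_nonneg (pow_nonneg hr _) (hg _)]
  refine le_trans (Finset.sum_le_sum fun j hj => ?_) (ENNReal.sum_le_tsum (Finset.range N))
  have hj := Finset.mem_range.1 hj
  rw [if_pos (by omega), ENNReal.ofReal_mul (pow_nonneg hr _),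
    show i - (j + s) = M - (j + 1) by omega]
  exact mul_le_mul_right (hgh j) _

/-- Let `ρ, β ∈ (0,1)` and `a, b, c ≥ 0`. There is a constant `C > 0`, depending only on
`ρ, β, a, b, c`, such that for every nonnegative square-summable sequence `(L_j)_{j ≥ 1}`,
with `B_q := a L_q + b ∑_{p=q}^∞ L_{p+1}/(p-q+1)²` and
`Γ_l^k := ρ^{k-l} (B_{l+1} + c ∑_{j=1}^l β^{l-j} L_j)`, one has
`∑_{k=2}^∞ (∑_{l=1}^{k-1} Γ_l^k)² ≤ C ∑_{j=1}^∞ L_j²`. -/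
theorem stmt10 (ρ β : ℝ) (hρ : ρ ∈ Set.Ioo (0 : ℝ) 1) (hβ : β ∈ Set.Ioo (0 : ℝ) 1)
    (a b c : ℝ) (ha : 0 ≤ a) (hb : 0 ≤ b) (hc : 0 ≤ c) :
    ∃ C > (0 : ℝ), ∀ L : ℕ → ℝ, (∀ j, 0 ≤ L j) →
      Summable (fun j : ℕ => L (j + 1) ^ 2) →
      ∑' k : ℕ,
          (∑ l ∈ Finset.Icc 1 (k - 1),
            ρ ^ (k - l) *
              ((a * L (l + 1) + b * ∑' p : ℕ, L ((l + 1) + p + 1) / ((p : ℝ) + 1) ^ 2) +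
                c * ∑ j ∈ Finset.Icc 1 l, β ^ (l - j) * L j)) ^ 2 ≤
        C * ∑' j : ℕ, L (j + 1) ^ 2 := by
  obtain ⟨hρ0, hρ1⟩ := hρ
  obtain ⟨hβ0, hβ1⟩ := hβ
  set r : ℕ → ℝ≥0∞ := fun m => ENNReal.ofReal (ρ ^ m) with hr
  set u : ℕ → ℝ≥0∞ := fun p => ENNReal.ofReal (1 / ((p : ℝ) + 1) ^ 2) with hu
  set v : ℕ → ℝ≥0∞ := fun m => ENNReal.ofReal (β ^ m) with hv
  have hr_fin : ∑' m, r m ≠ ⊤ := (summable_geometric_of_lt_one hρ0.le hρ1).tsum_ofReal_ne_top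
  have hv_fin : ∑' m, v m ≠ ⊤ := (summable_geometric_of_lt_one hβ0.le hβ1).tsum_ofReal_ne_top
  have hu_fin : ∑' m, u m ≠ ⊤ := by
    have h := (summable_nat_add_iff 1).2 (Real.summable_one_div_nat_pow.2 (one_lt_two))
    exact Summable.tsum_ofReal_ne_top (by simpa using h)
  set A : ℝ≥0∞ := (∑' m, r m) ^ 2 * (3 * (ENNReal.ofReal a ^ 2 +
    ENNReal.ofReal b ^ 2 * (∑' m, u m) ^ 2 + ENNReal.ofReal c ^ 2 * (∑' m, v m) ^ 2)) with hA
  have hA_fin : A ≠ ⊤ := by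
    rw [hA]
    finiteness
  refine ⟨A.toReal + 1, by positivity, fun L hL hS => ?_⟩
  set f : ℕ → ℝ≥0∞ := fun j => ENNReal.ofReal (L (j + 1)) with hf
  set D : ℕ → ℝ := fun l =>
    (a * L (l + 1) + b * ∑' p : ℕ, L ((l + 1) + p + 1) / ((p : ℝ) + 1) ^ 2) +
      c * ∑ j ∈ Finset.Icc 1 l, β ^ (l - j) * L j with hD
  have hq : ∀ l p : ℕ, 0 ≤ L ((l + 1) + p + 1) / ((p : ℝ) + 1) ^ 2 := fun l p =>
    div_nonneg (hL _) (by positivity)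
  have hs : ∀ l, 0 ≤ ∑ j ∈ Finset.Icc 1 l, β ^ (l - j) * L j := fun l =>
    Finset.sum_nonneg fun j _ => mul_nonneg (pow_nonneg hβ0.le _) (hL j)
  have hD0 : ∀ l, 0 ≤ D l := fun l =>
    add_nonneg (add_nonneg (mul_nonneg ha (hL _)) (mul_nonneg hb (tsum_nonneg (hq l))))
      (mul_nonneg hc (hs l))
  set E : ℕ → ℝ≥0∞ := fun n => ENNReal.ofReal a * f (n + 1) +
    ENNReal.ofReal b * ∑' p, u p * f (n + 2 + p) +
    ENNReal.ofReal c * ∑' j, (if j + 0 ≤ n then v (n - (j + 0)) else 0) * f j with hE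
  have hDE : ∀ n, ENNReal.ofReal (D (n + 1)) ≤ E n := by
    intro n
    refine ENNReal.ofReal_add_le.trans (add_le_add (ENNReal.ofReal_add_le.trans
      (add_le_add ?_ ?_)) ?_)
    · rw [ENNReal.ofReal_mul ha]
    · rw [ENNReal.ofReal_mul hb]
      refine mul_le_mul_right ((stmt10_ofReal_tsum_le _ (hq _)).trans
        (le_of_eq (tsum_congr fun p => ?_))) _
      rw [hu, hf, ← ENNReal.ofReal_mul (by positivity)]
      congr 1
      rw [show n + 1 + 1 + p + 1 = n + 2 + p + 1 by omega]
      ring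
    · rw [ENNReal.ofReal_mul hc]
      exact mul_le_mul_right (stmt10_ofReal_past_le β hβ0.le L hL f (fun _ => le_rfl)
        (n + 1) (n + 1) 0 n le_rfl rfl) _
  have hmain : ∑' k : ℕ, ENNReal.ofReal
      ((∑ l ∈ Finset.Icc 1 (k - 1), ρ ^ (k - l) * D l) ^ 2) ≤ A * ∑' j, f j ^ 2 := by
    calc _ ≤ ∑' k, (∑' j, (if j + 1 ≤ k then r (k - (j + 1)) else 0) * E j) ^ 2 := by
          refine ENNReal.tsum_le_tsum fun k => ?_
          rw [ENNReal.ofReal_pow (Finset.sum_nonneg fun l _ =>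
            mul_nonneg (pow_nonneg hρ0.le _) (hD0 l))]
          exact pow_le_pow_left' (stmt10_ofReal_past_le ρ hρ0.le D hD0 E hDE
            (k - 1) k 1 k (Nat.sub_le _ _) rfl) 2
      _ ≤ (∑' m, r m) ^ 2 * ∑' j, E j ^ 2 := stmt10_conv_past r E 1
      _ ≤ (∑' m, r m) ^ 2 * _ := mul_le_mul_right (stmt10_inner _ _ _ u v f) _
      _ = _ := by rw [hA, ← mul_assoc]
  have hfS : ∑' j, f j ^ 2 = ENNReal.ofReal (∑' j : ℕ, L (j + 1) ^ 2) := by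
    rw [ENNReal.ofReal_tsum_of_nonneg (fun _ => sq_nonneg _) hS]
    exact tsum_congr fun j => (ENNReal.ofReal_pow (hL _) 2).symm
  have hS0 : 0 ≤ ∑' j : ℕ, L (j + 1) ^ 2 := tsum_nonneg fun _ => sq_nonneg _
  have hreal : ∑' k : ℕ, (∑ l ∈ Finset.Icc 1 (k - 1), ρ ^ (k - l) * D l) ^ 2 =
      (∑' k : ℕ, ENNReal.ofReal
        ((∑ l ∈ Finset.Icc 1 (k - 1), ρ ^ (k - l) * D l) ^ 2)).toReal := by
    rw [ENNReal.tsum_toReal_eq fun _ => ENNReal.ofReal_ne_top]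
    exact tsum_congr fun k => (ENNReal.toReal_ofReal (sq_nonneg _)).symm
  calc _ = _ := hreal
    _ ≤ (A * ∑' j, f j ^ 2).toReal :=
        ENNReal.toReal_mono (ENNReal.mul_ne_top hA_fin (hfS ▸ ENNReal.ofReal_ne_top)) hmain
    _ = A.toReal * ∑' j : ℕ, L (j + 1) ^ 2 := by
        rw [ENNReal.toReal_mul, hfS, ENNReal.toReal_ofReal hS0]
    _ ≤ _ := mul_le_mul_of_nonneg_right (le_add_of_nonneg_right zero_le_one) hS0
end

section
/- Fix an integer p₀ ≥ 1 and define ℓ : {1,2,3,…} → {0,1,2,…} by ℓ(k) = k − 1 if k ≤ p₀·log(1+k), and ℓ(k) = p₀·⌊log(1+k)⌋ otherwise (natural logarithm). Let α ∈ (0,1), η > 0 and s > 0, and suppose p₀·η·log(1/α) ≥ s. Then there exists a constant C > 0 such that α^{η·ℓ(m)} ≤ C·(1+m)^{−s} for every integer m ≥ 1. -/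
/-!
Both branches of `ell` satisfy `p₀ log(1+m) - K ≤ ell p₀ m` with `K = p₀ log p₀ + p₀ + 2`
(`ell_lower_bound`): the second loses at most `p₀` to the floor, while the first follows from
the tangent-line bound `log x ≤ x / p₀ - 1 + log p₀` at `x = 1 + m`. Multiplying by
`η log(1/α) > 0` and using `s ≤ p₀ η log(1/α)` gives
`s log(1+m) ≤ η log(1/α) (ell p₀ m + K)`, which exponentiates to the claim with
`C = exp(η log(1/α) K)`.
-/

/-- The truncation function `ℓ` from (5.2): `ℓ(k) = k - 1` if `k ≤ p₀ log(1+k)`,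
and `ℓ(k) = p₀ ⌊log(1+k)⌋` otherwise. -/
noncomputable def ell (p₀ : ℕ) (k : ℕ) : ℕ :=
  if (k : ℝ) ≤ (p₀ : ℝ) * Real.log (1 + (k : ℝ)) then k - 1
  else p₀ * ⌊Real.log (1 + (k : ℝ))⌋₊

theorem ell_lower_bound (p₀ : ℕ) (hp₀ : 1 ≤ p₀) (m : ℕ) (hm : 1 ≤ m) :
    (p₀ : ℝ) * Real.log (1 + (m : ℝ)) ≤
      (ell p₀ m : ℝ) + ((p₀ : ℝ) * Real.log p₀ + p₀ + 2) := by
  have hp : (1 : ℝ) ≤ p₀ := by exact_mod_cast hp₀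
  have hp' : (0 : ℝ) < p₀ := by linarith
  have hlogp : 0 ≤ (p₀ : ℝ) * Real.log p₀ := mul_nonneg hp'.le (Real.log_nonneg hp)
  have hx : (0 : ℝ) < 1 + m := by positivity
  unfold ell
  split_ifs with hc
  · have h1 := Real.log_le_sub_one_of_pos (div_pos hx hp')
    rw [Real.log_div hx.ne' hp'.ne'] at h1
    have h2 := mul_le_mul_of_nonneg_left h1 hp'.le
    have h3 : (p₀ : ℝ) * ((1 + m) / p₀ - 1) = 1 + m - p₀ := by field_simp
    rw [h3] at h2
    push_cast [Nat.cast_sub hm]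
    linarith
  · have h1 := Nat.lt_floor_add_one (Real.log (1 + (m : ℝ)))
    have h2 := mul_le_mul_of_nonneg_left h1.le hp'.le
    push_cast
    linarith

/-- If `α ∈ (0,1)`, `η > 0`, `s > 0` and `p₀ η log(1/α) ≥ s`, then there is `C > 0`
with `α^{η ℓ(m)} ≤ C (1+m)^{-s}` for all integers `m ≥ 1`. -/
theorem stmt11 (p₀ : ℕ) (hp₀ : 1 ≤ p₀) (α η s : ℝ)
    (hα : α ∈ Set.Ioo (0 : ℝ) 1) (hη : 0 < η) (hs : 0 < s)
    (h : s ≤ (p₀ : ℝ) * η * Real.log (1 / α)) :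
    ∃ C > (0 : ℝ), ∀ m : ℕ, 1 ≤ m →
      α ^ (η * (ell p₀ m : ℝ)) ≤ C * (1 + (m : ℝ)) ^ (-s) := by
  have hL : 0 < Real.log (1 / α) := by
    rw [one_div, Real.log_inv]
    linarith [Real.log_neg hα.1 hα.2]
  have hα' : Real.log α = -Real.log (1 / α) := by rw [one_div, Real.log_inv, neg_neg]
  refine ⟨Real.exp (η * Real.log (1 / α) * ((p₀ : ℝ) * Real.log p₀ + p₀ + 2)),
    Real.exp_pos _, fun m hm => ?_⟩
  have hx : (0 : ℝ) < 1 + m := by positivity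
  have hlog : 0 ≤ Real.log (1 + (m : ℝ)) := Real.log_nonneg (by linarith [m.cast_nonneg (α := ℝ)])
  rw [Real.rpow_def_of_pos hα.1, Real.rpow_def_of_pos hx, ← Real.exp_add, Real.exp_le_exp, hα']
  have h1 := mul_le_mul_of_nonneg_left (ell_lower_bound p₀ hp₀ m hm) (mul_pos hη hL).le
  have h2 := mul_le_mul_of_nonneg_right h hlog
  linarith
end

section
/- Fix an integer p₀ ≥ 1 and define ℓ : {1,2,3,…} → {0,1,2,…} by ℓ(k) = k − 1 if k ≤ p₀·log(1+k), and ℓ(k) = p₀·⌊log(1+k)⌋ otherwise (natural logarithm). For an integer l ≥ 2, let p*(l) be the largest integer q ≥ 1 such that q + ℓ(q) < l. Then there exists a constant c₁ ≥ 0, depending only on p₀, such that ℓ(p*(l)) ≥ ℓ(l) − c₁ for every integer l ≥ 2. -/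
/-- `p*(l)`: the largest integer `q ≥ 1` with `q + ℓ(q) < l`. -/
noncomputable def pstar (p₀ l : ℕ) : ℕ :=
  sSup {q : ℕ | 1 ≤ q ∧ q + ell p₀ q < l}

lemma ell_le_mul_log (p₀ k : ℕ) : (ell p₀ k : ℝ) ≤ p₀ * Real.log (1 + (k : ℝ)) := by
  unfold ell
  split_ifs with h
  · exact le_trans (by exact_mod_cast Nat.sub_le k 1) h
  · push_cast
    have : 0 ≤ Real.log (1 + (k : ℝ)) := Real.log_nonneg (by simp)
    gcongr
    exact Nat.floor_le this

lemma ell_le_self (p₀ k : ℕ) : ell p₀ k ≤ k := by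
  by_cases h : (k : ℝ) ≤ (p₀ : ℝ) * Real.log (1 + (k : ℝ))
  · simp [ell, h]
  · exact_mod_cast (ell_le_mul_log p₀ k).trans (not_le.mp h).le

/-- Maximality of `p*(l)` means that `p*(l) + 1` violates the defining inequality. -/
lemma le_two_mul_pstar (p₀ l : ℕ) : l ≤ 2 * (pstar p₀ l + 1) := by
  by_contra! hlt
  have hbdd : BddAbove {q : ℕ | 1 ≤ q ∧ q + ell p₀ q < l} :=
    ⟨l, fun q hq => by have := hq.2; omega⟩
  have hmem : pstar p₀ l + 1 ∈ {q : ℕ | 1 ≤ q ∧ q + ell p₀ q < l} := by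
    have := ell_le_self p₀ (pstar p₀ l + 1)
    exact ⟨by omega, by omega⟩
  have : pstar p₀ l + 1 ≤ pstar p₀ l := le_csSup hbdd hmem
  omega

lemma le_of_le_mul_log (p₀ q : ℕ) (hp₀ : 1 ≤ p₀)
    (h : (q : ℝ) ≤ (p₀ : ℝ) * Real.log (1 + (q : ℝ))) : (q : ℝ) ≤ 1 + 4 * (p₀ : ℝ) ^ 2 := by
  have hp : (1 : ℝ) ≤ p₀ := by exact_mod_cast hp₀
  -- the tangent to `log` at `2p₀` has slope `1 / (2p₀)`, which absorbs half of `q`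
  have h1 : Real.log ((1 + (q : ℝ)) / (2 * p₀)) ≤ (1 + (q : ℝ)) / (2 * p₀) - 1 :=
    Real.log_le_sub_one_of_pos (by positivity)
  rw [Real.log_div (by positivity) (by positivity)] at h1
  have h2 : Real.log (2 * (p₀ : ℝ)) ≤ 2 * p₀ - 1 :=
    Real.log_le_sub_one_of_pos (by positivity)
  have h3 : (p₀ : ℝ) * Real.log (1 + (q : ℝ)) ≤ p₀ * ((1 + (q : ℝ)) / (2 * p₀) + 2 * p₀) := by
    gcongr
    linarith
  have h4 : (p₀ : ℝ) * ((1 + (q : ℝ)) / (2 * p₀) + 2 * p₀) = (1 + q) / 2 + 2 * (p₀ : ℝ) ^ 2 := by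
    field_simp
  linarith

/-- There is a constant `c₁ ≥ 0`, depending only on `p₀`, such that
`ℓ(p*(l)) ≥ ℓ(l) - c₁` for every integer `l ≥ 2`. -/
theorem stmt12 (p₀ : ℕ) (hp₀ : 1 ≤ p₀) :
    ∃ c₁ : ℝ, 0 ≤ c₁ ∧ ∀ l : ℕ, 2 ≤ l →
      (ell p₀ (pstar p₀ l) : ℝ) ≥ (ell p₀ l : ℝ) - c₁ := by
  refine ⟨p₀ * (4 * (p₀ : ℝ) ^ 2 + 3), by positivity, fun l _ => ?_⟩
  have hl : (l : ℝ) ≤ 2 * ((pstar p₀ l : ℝ) + 1) := by exact_mod_cast le_two_mul_pstar p₀ l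
  have hell := ell_le_mul_log p₀ l
  generalize pstar p₀ l = q at *
  have hlog4 : Real.log 4 ≤ 2 := by
    have h : (4 : ℝ) = 2 ^ 2 := by norm_num
    rw [h, Real.log_pow]
    have := Real.log_two_lt_d9
    push_cast
    linarith
  have hlog : Real.log (1 + (l : ℝ)) ≤ Real.log (1 + (q : ℝ)) + 2 := by
    have h : Real.log (1 + (l : ℝ)) ≤ Real.log (4 * (1 + (q : ℝ))) := by
      have : (0 : ℝ) ≤ q := by positivity
      exact Real.log_le_log (by positivity) (by linarith)
    rw [Real.log_mul (by norm_num) (by positivity)] at h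
    linarith
  have hup : (ell p₀ l : ℝ) ≤ p₀ * (Real.log (1 + (q : ℝ)) + 2) :=
    hell.trans (by gcongr)
  by_cases h : (q : ℝ) ≤ (p₀ : ℝ) * Real.log (1 + (q : ℝ))
  · have hq := le_of_le_mul_log p₀ q hp₀ h
    have hlq : Real.log (1 + (q : ℝ)) ≤ q := by
      have := Real.log_le_sub_one_of_pos (x := 1 + (q : ℝ)) (by positivity)
      linarith
    have : (p₀ : ℝ) * (Real.log (1 + (q : ℝ)) + 2) ≤ p₀ * (4 * (p₀ : ℝ) ^ 2 + 3) := by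
      exact mul_le_mul_of_nonneg_left (by linarith) (by positivity)
    have h0 : (0 : ℝ) ≤ ell p₀ q := by positivity
    linarith
  · have hq : (ell p₀ q : ℝ) = p₀ * (⌊Real.log (1 + (q : ℝ))⌋₊ : ℝ) := by simp [ell, h]
    have hfl := Nat.lt_floor_add_one (Real.log (1 + (q : ℝ)))
    have : (p₀ : ℝ) * (Real.log (1 + (q : ℝ)) + 2)
        ≤ p₀ * ((⌊Real.log (1 + (q : ℝ))⌋₊ : ℝ) + (4 * (p₀ : ℝ) ^ 2 + 3)) := by
      have : 0 ≤ (p₀ : ℝ) ^ 2 := by positivity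
      exact mul_le_mul_of_nonneg_left (by linarith) (by positivity)
    rw [hq]
    linarith
end

section
/- Fix an integer p₀ ≥ 1 and define ℓ : {1,2,3,…} → {0,1,2,…} by ℓ(k) = k − 1 if k ≤ p₀·log(1+k), and ℓ(k) = p₀·⌊log(1+k)⌋ otherwise (natural logarithm). For an integer l ≥ 2, let p*(l) be the largest integer q ≥ 1 such that q + ℓ(q) < l. Then there exists a constant c₀ ≥ 0, depending only on p₀, such that for all integers l ≥ 2, all integers s with 0 ≤ s < ℓ(l), and all integers p with p*(l) + 1 ≤ p ≤ l, one has min(ℓ(p), l − p + s) ≥ s/2 + (l − p)/2 − c₀. -/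
theorem ell_le (p₀ k : ℕ) : (ell p₀ k : ℝ) ≤ p₀ * Real.log (1 + k) := by
  have hlog : 0 ≤ Real.log (1 + (k : ℝ)) := Real.log_nonneg (by simp)
  unfold ell
  split_ifs with h
  · have h1 : ((k - 1 : ℕ) : ℝ) ≤ k := by exact_mod_cast Nat.sub_le k 1
    linarith
  · push_cast
    exact mul_le_mul_of_nonneg_left (Nat.floor_le hlog) (by positivity)

theorem le_ell_add (p₀ k : ℕ) (hp₀ : 1 ≤ p₀) :
    p₀ * Real.log (1 + k) ≤ ell p₀ k + (1 + 2 * p₀ * Real.log (2 * p₀) + p₀) := by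
  have hp : (1 : ℝ) ≤ p₀ := by exact_mod_cast hp₀
  have hlogp : 0 ≤ p₀ * Real.log (2 * (p₀ : ℝ)) :=
    mul_nonneg (by linarith) (Real.log_nonneg (by linarith))
  unfold ell
  split_ifs with h
  -- The tangent bound `log x ≤ x / a + log a - 1` at `a = 2 p₀` gives
  -- `p₀ log (1 + k) ≤ (1 + k) / 2 + const`, and `k ≤ p₀ log (1 + k)` lets the right side be absorbed.
  · have h1 : Real.log ((1 + k) / (2 * p₀)) ≤ (1 + k) / (2 * p₀) - 1 :=
      Real.log_le_sub_one_of_pos (by positivity)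
    rw [Real.log_div (by positivity) (by positivity)] at h1
    have h2 : (p₀ : ℝ) * (Real.log (1 + k) - Real.log (2 * p₀))
        ≤ p₀ * ((1 + k) / (2 * p₀) - 1) := mul_le_mul_of_nonneg_left h1 (by linarith)
    have h3 : (p₀ : ℝ) * ((1 + k) / (2 * p₀) - 1) = (1 + k) / 2 - p₀ := by
      field_simp
    have h4 : (0 : ℝ) ≤ ((k - 1 : ℕ) : ℝ) := Nat.cast_nonneg _
    linarith
  · push_cast
    have h1 := (Nat.lt_floor_add_one (Real.log (1 + (k : ℝ)))).le
    have h2 := mul_le_mul_of_nonneg_left h1 (by linarith : (0 : ℝ) ≤ p₀)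
    linarith

/-- The set defining `p*(l)` is bounded by `l`, so its supremum is a genuine maximum and every
index beyond it fails the defining inequality. -/
theorem le_add_ell_of_pstar_lt {p₀ l p : ℕ} (h : pstar p₀ l + 1 ≤ p) : l ≤ p + ell p₀ p := by
  by_contra! hlt
  have hb : BddAbove {q : ℕ | 1 ≤ q ∧ q + ell p₀ q < l} :=
    ⟨l, fun q hq => by have := hq.2; omega⟩
  have hle : p ≤ pstar p₀ l := le_csSup hb ⟨by omega, hlt⟩
  omega

/-- There is a constant `c₀ ≥ 0`, depending only on `p₀`, such that for all `l ≥ 2`,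
all integers `0 ≤ s < ℓ(l)` and all `p` with `p*(l) + 1 ≤ p ≤ l`, one has
`min(ℓ(p), l - p + s) ≥ s/2 + (l - p)/2 - c₀`. -/
theorem stmt13 (p₀ : ℕ) (hp₀ : 1 ≤ p₀) :
    ∃ c₀ : ℝ, 0 ≤ c₀ ∧ ∀ l : ℕ, 2 ≤ l → ∀ s : ℕ, s < ell p₀ l →
      ∀ p : ℕ, pstar p₀ l + 1 ≤ p → p ≤ l →
        min ((ell p₀ p : ℝ)) ((l : ℝ) - (p : ℝ) + (s : ℝ)) ≥
          (s : ℝ) / 2 + ((l : ℝ) - (p : ℝ)) / 2 - c₀ := by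
  have hp : (1 : ℝ) ≤ p₀ := by exact_mod_cast hp₀
  have hlogp : 0 ≤ p₀ * Real.log (2 * (p₀ : ℝ)) :=
    mul_nonneg (by linarith) (Real.log_nonneg (by linarith))
  have hlogp' : 0 ≤ p₀ * Real.log (1 + (p₀ : ℝ)) :=
    mul_nonneg (by linarith) (Real.log_nonneg (by linarith))
  have hc : 0 ≤ (p₀ * Real.log (1 + (p₀ : ℝ))
      + (1 + 2 * p₀ * Real.log (2 * p₀) + p₀)) / 2 := by linarith
  refine ⟨_, hc, ?_⟩
  intro l _ s hs p hlow hpl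
  have hs' : (s : ℝ) ≤ ell p₀ l := by exact_mod_cast hs.le
  have hs0 : (0 : ℝ) ≤ s := Nat.cast_nonneg _
  have hpl' : (p : ℝ) ≤ l := by exact_mod_cast hpl
  have hl : (l : ℝ) ≤ p + ell p₀ p := by exact_mod_cast le_add_ell_of_pstar_lt hlow
  have hup := ell_le p₀ p
  have hlogle : Real.log (1 + (p : ℝ)) ≤ p := by
    have := Real.log_le_sub_one_of_pos (by positivity : (0 : ℝ) < 1 + p)
    linarith
  have hmul := mul_le_mul_of_nonneg_left hlogle (by linarith : (0 : ℝ) ≤ p₀)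
  have hlog : Real.log (1 + (l : ℝ)) ≤ Real.log (1 + p₀) + Real.log (1 + p) := by
    rw [← Real.log_mul (by positivity) (by positivity)]
    exact Real.log_le_log (by positivity) (by nlinarith)
  have hlog' := mul_le_mul_of_nonneg_left hlog (by linarith : (0 : ℝ) ≤ p₀)
  have hl_up := ell_le p₀ l
  have hp_low := le_ell_add p₀ p hp₀
  refine le_min ?_ ?_ <;> linarith
end
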